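/- arXiv:2401.05053 — 6 statements merged into one kernel-verified Lean document; each statement's English description precedes it below -/
import Mathlib

section
/- Let ψ = (φ₁,…,φₙ; σ) : ℤ^k → (ℤ^k)^n ⋊ Σ_n be a morphism. If i and j belong to the same σ-class, then φ_i(z) = φ_j(z) for all z ∈ S_i = S_j. -/
theorem stmt3 {k n : ℕ} (hk : 1 ≤ k) (hn : 1 ≤ n)
    (σ : (Fin k → ℤ) → Equiv.Perm (Fin n))
    (hσ : ∀ z₁ z₂ : Fin k → ℤ, σ (z₁ + z₂) = σ z₁ * σ z₂)
    (φ : Fin n → (Fin k → ℤ) → Fin k → ℤ)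
    (hφ : ∀ (i : Fin n) (z₁ z₂ : Fin k → ℤ),
      φ i (z₁ + z₂) = φ i z₁ + φ ((σ z₁)⁻¹ i) z₂)
    (i j : Fin n) (hij : ∃ z₀ : Fin k → ℤ, j = (σ z₀)⁻¹ i) :
    ∀ z : Fin k → ℤ, σ z i = i → φ i z = φ j z := by
  obtain ⟨z₀, rfl⟩ := hij
  intro z hz
  -- Expand `φ i (z + z₀) = φ i (z₀ + z)` in both orders; since `σ z` fixes `i`, both
  -- expansions contain the term `φ i z₀`, which cancels.
  have hz' : (σ z)⁻¹ i = i := Equiv.Perm.inv_eq_iff_eq.mpr hz.symm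
  have h₁ := hφ i z z₀
  rw [hz', add_comm z z₀, hφ i z₀ z, add_comm (φ i z)] at h₁
  exact (add_left_cancel h₁).symm
end

section
/- Let ψ = (φ₁,…,φₙ; σ) : ℤ^k → (ℤ^k)^n ⋊ Σ_n be a morphism and suppose A₁,…,Aₙ ∈ ℝ^{k×k} and a₁,…,aₙ ∈ ℝ^k satisfy A_i z + a_i = a_{σ_z^{-1}(i)} + φ_i(z) for all i ∈ {1,…,n} and z ∈ ℤ^k. Then for any given i and z: a_i − a_{σ_z^{-1}(i)} ∈ ℤ^k if and only if φ_i(n_{iz} z) ∈ n_{iz} ℤ^k. -/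
/-!
Put `N = n_{iz}`. Since `σ_{Nz} = (σ_z)^N` fixes `i`, the defining equation at `N z` has the same
translation part `a i` on both sides, so it reduces to `N • (A i z) = φ i (N z)`
(`smul_mulVec_eq`). The defining equation at `z` reads
`a i - a (σ_z⁻¹ i) = φ i z - A i z`, and `φ i z` is integral. Hence the left-hand condition says
that `A i z` is integral, which means exactly that `φ i (N z)` is divisible by `N`.
-/

/-- The inclusion of the standard lattice `ℤ^k` into `ℝ^k`. -/
def coeVec {k : ℕ} (z : Fin k → ℤ) : Fin k → ℝ := fun j => (z j : ℝ)

/-- `IsCycleLen τ i N` says that `N` is the smallest positive integer `m` with `τ^m i = i`,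
i.e. the length of the cycle of `τ` containing `i`. -/
def IsCycleLen {n : ℕ} (τ : Equiv.Perm (Fin n)) (i : Fin n) (N : ℕ) : Prop :=
  0 < N ∧ (τ ^ N) i = i ∧ ∀ m : ℕ, 0 < m → (τ ^ m) i = i → N ≤ m

lemma map_nsmul_eq_pow {k n : ℕ} (σ : (Fin k → ℤ) → Equiv.Perm (Fin n))
    (hσ : ∀ z₁ z₂ : Fin k → ℤ, σ (z₁ + z₂) = σ z₁ * σ z₂) (z : Fin k → ℤ) (N : ℕ) :
    σ ((N : ℤ) • z) = σ z ^ N := by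
  induction N with
  | zero =>
    have h := hσ 0 0
    simpa using h
  | succ m ih =>
    rw [Nat.cast_succ, add_smul, one_smul, hσ, ih, pow_succ]

lemma coeVec_zsmul {k : ℕ} (m : ℤ) (z : Fin k → ℤ) :
    coeVec (m • z) = (m : ℝ) • coeVec z := by
  ext j
  simp [coeVec]

lemma coeVec_sub {k : ℕ} (z w : Fin k → ℤ) : coeVec (z - w) = coeVec z - coeVec w := by
  ext j
  simp [coeVec]

lemma coeVec_injective {k : ℕ} : Function.Injective (coeVec (k := k)) := by
  intro z w h
  ext j
  have := congrFun h j
  simpa [coeVec] using this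

/-- If `(σ z) ^ N` fixes `i`, the translation parts of the affine identity at `N z` cancel. -/
lemma smul_mulVec_eq {k n : ℕ}
    (σ : (Fin k → ℤ) → Equiv.Perm (Fin n))
    (hσ : ∀ z₁ z₂ : Fin k → ℤ, σ (z₁ + z₂) = σ z₁ * σ z₂)
    (φ : Fin n → (Fin k → ℤ) → Fin k → ℤ)
    (A : Fin n → Matrix (Fin k) (Fin k) ℝ) (a : Fin n → Fin k → ℝ)
    (heq : ∀ (i : Fin n) (z : Fin k → ℤ),
      (A i).mulVec (coeVec z) + a i = a ((σ z)⁻¹ i) + coeVec (φ i z))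
    (i : Fin n) (z : Fin k → ℤ) (N : ℕ) (hfix : (σ z ^ N) i = i) :
    (N : ℝ) • (A i).mulVec (coeVec z) = coeVec (φ i ((N : ℤ) • z)) := by
  have h := heq i ((N : ℤ) • z)
  have hinv : (σ z ^ N)⁻¹ i = i := by
    rw [Equiv.Perm.inv_eq_iff_eq, hfix]
  rw [map_nsmul_eq_pow σ hσ, hinv, coeVec_zsmul, Matrix.mulVec_smul, add_comm] at h
  simpa using add_left_cancel h

theorem stmt6 {k n : ℕ} (hk : 1 ≤ k) (hn : 1 ≤ n)
    (σ : (Fin k → ℤ) → Equiv.Perm (Fin n))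
    (hσ : ∀ z₁ z₂ : Fin k → ℤ, σ (z₁ + z₂) = σ z₁ * σ z₂)
    (φ : Fin n → (Fin k → ℤ) → Fin k → ℤ)
    (hφ : ∀ (i : Fin n) (z₁ z₂ : Fin k → ℤ),
      φ i (z₁ + z₂) = φ i z₁ + φ ((σ z₁)⁻¹ i) z₂)
    (A : Fin n → Matrix (Fin k) (Fin k) ℝ) (a : Fin n → Fin k → ℝ)
    (heq : ∀ (i : Fin n) (z : Fin k → ℤ),
      (A i).mulVec (coeVec z) + a i = a ((σ z)⁻¹ i) + coeVec (φ i z))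
    (i : Fin n) (z : Fin k → ℤ) (N : ℕ) (hN : IsCycleLen (σ z) i N) :
    (∃ w : Fin k → ℤ, a i - a ((σ z)⁻¹ i) = coeVec w) ↔
      (∃ w : Fin k → ℤ, φ i ((N : ℤ) • z) = (N : ℤ) • w) := by
  obtain ⟨hpos, hfix, -⟩ := hN
  have hN0 : (N : ℝ) ≠ 0 := by exact_mod_cast hpos.ne'
  have key := smul_mulVec_eq σ hσ φ A a heq i z N hfix
  have hdiff : a i - a ((σ z)⁻¹ i) = coeVec (φ i z) - (A i).mulVec (coeVec z) := by
    rw [sub_eq_sub_iff_add_eq_add, add_comm (a i), heq i z, add_comm]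
  constructor
  · rintro ⟨w, hw⟩
    refine ⟨φ i z - w, coeVec_injective ?_⟩
    rw [← key, coeVec_zsmul, coeVec_sub, ← hw, hdiff, sub_sub_cancel, Int.cast_natCast]
  · rintro ⟨w, hw⟩
    refine ⟨φ i z - w, ?_⟩
    rw [hw, coeVec_zsmul, Int.cast_natCast] at key
    rw [hdiff, coeVec_sub, smul_right_injective _ hN0 key]
end

section
/- Let ψ = (φ₁,…,φₙ; σ) : ℤ^k → (ℤ^k)^n ⋊ Σ_n be a morphism. If there exist i ∈ {1,…,n} and z ∈ ℤ^k with z ∉ S_i such that φ_i(n_{iz} z) ∈ n_{iz} ℤ^k, then ψ is not induced by any affine n-valued map. -/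
/-- The morphism `ψ = (φ₁,…,φₙ;σ)` is induced by an affine `n`-valued map of the `k`-torus:
there are matrices `A₁,…,Aₙ` and vectors `a₁,…,aₙ` satisfying the lift-equivariance
equation, such that the affine maps are pairwise distinct modulo `ℤ^k`. -/
def InducedByAffine {k n : ℕ} (σ : (Fin k → ℤ) → Equiv.Perm (Fin n))
    (φ : Fin n → (Fin k → ℤ) → Fin k → ℤ) : Prop :=
  ∃ (A : Fin n → Matrix (Fin k) (Fin k) ℝ) (a : Fin n → Fin k → ℝ),
    (∀ (i : Fin n) (z : Fin k → ℤ) (t : Fin k → ℝ),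
      (A i).mulVec (t + coeVec z) + a i =
        (A ((σ z)⁻¹ i)).mulVec t + a ((σ z)⁻¹ i) + coeVec (φ i z)) ∧
    (∀ i j : Fin n, i ≠ j → ∀ t : Fin k → ℝ,
      ¬ ∃ w : Fin k → ℤ, ((A i).mulVec t + a i) - ((A j).mulVec t + a j) = coeVec w)

theorem stmt7 {k n : ℕ} (hk : 1 ≤ k) (hn : 1 ≤ n)
    (σ : (Fin k → ℤ) → Equiv.Perm (Fin n))
    (hσ : ∀ z₁ z₂ : Fin k → ℤ, σ (z₁ + z₂) = σ z₁ * σ z₂)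
    (φ : Fin n → (Fin k → ℤ) → Fin k → ℤ)
    (hφ : ∀ (i : Fin n) (z₁ z₂ : Fin k → ℤ),
      φ i (z₁ + z₂) = φ i z₁ + φ ((σ z₁)⁻¹ i) z₂)
    (h : ∃ (i : Fin n) (z : Fin k → ℤ) (N : ℕ), ¬ σ z i = i ∧ IsCycleLen (σ z) i N ∧
      ∃ w : Fin k → ℤ, φ i ((N : ℤ) • z) = (N : ℤ) • w) :
    ¬ InducedByAffine σ φ := by
  rintro ⟨A, a, hA, hne⟩
  obtain ⟨i, z, N, hzi, ⟨hN, hcyc, -⟩, w, hw⟩ := h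
  have hσ0 : σ 0 = 1 := by
    have h0 := hσ 0 0
    rw [add_zero] at h0
    exact left_eq_mul.mp h0
  have hpow : ∀ m : ℕ, σ ((m : ℤ) • z) = σ z ^ m := by
    intro m
    induction m with
    | zero => simpa using hσ0
    | succ m ih => rw [Nat.cast_succ, add_smul, one_smul, hσ, ih, pow_succ]
  have hfix : (σ ((N : ℤ) • z))⁻¹ i = i := by
    rw [hpow, Equiv.Perm.inv_eq_iff_eq, hcyc]
  have hNR : (N : ℝ) ≠ 0 := by exact_mod_cast hN.ne'
  have hAz : (A i).mulVec (coeVec z) = coeVec w := by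
    have h1 := hA i ((N : ℤ) • z) 0
    rw [hfix, hw, zero_add, Matrix.mulVec_zero, zero_add, add_comm] at h1
    have h2 := add_left_cancel h1
    have hc : ∀ v : Fin k → ℤ, coeVec ((N : ℤ) • v) = (N : ℝ) • coeVec v := by
      intro v
      ext l
      simp [coeVec]
    rw [hc, hc, Matrix.mulVec_smul] at h2
    exact smul_right_injective _ hNR h2
  have hij : i ≠ (σ z)⁻¹ i := fun e => hzi (Equiv.Perm.inv_eq_iff_eq.mp e.symm).symm
  refine hne i _ hij 0 ⟨φ i z - w, ?_⟩
  have h3 := hA i z 0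
  rw [zero_add, hAz, Matrix.mulVec_zero, zero_add] at h3
  rw [Matrix.mulVec_zero, Matrix.mulVec_zero, zero_add, zero_add]
  ext l
  have h4 := congrFun h3 l
  simp only [coeVec, Pi.add_apply, Pi.sub_apply, Int.cast_sub] at h4 ⊢
  linarith
end

section
/- Let ψ = (φ₁,…,φₙ; σ) : ℤ^k → (ℤ^k)^n ⋊ Σ_n be a morphism that is induced by an affine n-valued map. If z ∈ ℤ^k and i ∈ {1,…,n} satisfy σ_z(i) ≠ i, then the values φ_{(σ_z)^{-m}(i)}(z) for m = 0, 1, …, n_{iz}−1 are not all equal. -/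
theorem stmt9 {k n : ℕ} (hk : 1 ≤ k) (hn : 1 ≤ n)
    (σ : (Fin k → ℤ) → Equiv.Perm (Fin n))
    (hσ : ∀ z₁ z₂ : Fin k → ℤ, σ (z₁ + z₂) = σ z₁ * σ z₂)
    (φ : Fin n → (Fin k → ℤ) → Fin k → ℤ)
    (hφ : ∀ (i : Fin n) (z₁ z₂ : Fin k → ℤ),
      φ i (z₁ + z₂) = φ i z₁ + φ ((σ z₁)⁻¹ i) z₂)
    (haff : InducedByAffine σ φ)
    (i : Fin n) (z : Fin k → ℤ) (hzi : σ z i ≠ i) (N : ℕ) (hN : IsCycleLen (σ z) i N) :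
    ¬ ∀ m : ℕ, m < N → φ (((σ z)⁻¹ ^ m) i) z = φ i z := by
  obtain ⟨A, a, hA, hne⟩ := haff
  obtain ⟨hN0, hNi, -⟩ := hN
  intro hall
  set s := (σ z)⁻¹ with hs
  have htrans : ∀ j, a (s j) = a j + ((A j).mulVec (coeVec z) - coeVec (φ j z)) := by
    intro j
    have h := hA j z 0
    simp only [zero_add, Matrix.mulVec_zero] at h
    rw [← hs] at h
    rw [← add_sub_assoc, add_comm (a j), h, add_sub_cancel_right]
  have hlin : ∀ j t, (A (s j)).mulVec t = (A j).mulVec t := by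
    intro j t
    have h := hA j z t
    rw [← hs, htrans j, Matrix.mulVec_add] at h
    ext x
    have hx := congrFun h x
    simp only [Pi.add_apply, Pi.sub_apply] at hx
    linarith
  have horbit : ∀ m, ∀ t, (A ((s ^ m) i)).mulVec t = (A i).mulVec t := by
    intro m
    induction m with
    | zero => intro t; simp
    | succ m ih => intro t; rw [pow_succ', Equiv.Perm.mul_apply, hlin, ih]
  have hstep : ∀ m : ℕ, m ≤ N → a ((s ^ m) i) =
      a i + (m : ℝ) • ((A i).mulVec (coeVec z) - coeVec (φ i z)) := by
    intro m
    induction m with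
    | zero => intro _; simp
    | succ m ih =>
      intro hm
      rw [pow_succ', Equiv.Perm.mul_apply, htrans, ih (by omega), horbit, hall m (by omega)]
      push_cast
      rw [add_smul, one_smul, add_assoc]
  have hsN : (s ^ N) i = i := by
    rw [hs, inv_pow, Equiv.Perm.inv_eq_iff_eq]
    exact hNi.symm
  have hv : (A i).mulVec (coeVec z) - coeVec (φ i z) = 0 := by
    have h := hstep N le_rfl
    rw [hsN, left_eq_add, smul_eq_zero] at h
    exact h.resolve_left (by exact_mod_cast hN0.ne')
  have hsi : i ≠ s i := by
    intro h
    exact hzi (Equiv.Perm.inv_eq_iff_eq.mp h.symm).symm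
  refine hne i (s i) hsi 0 ⟨0, ?_⟩
  rw [hlin, htrans, hv]
  ext x
  simp [coeVec]
end

section
/- Let ψ = (φ₁,…,φₙ; σ) : ℤ^k → (ℤ^k)^n ⋊ Σ_n be a morphism and f₁,…,fₙ : ℝ^k → ℝ^k maps with f_i(t+z) = f_{σ_z^{-1}(i)}(t) + φ_i(z) for all i, z ∈ ℤ^k, t ∈ ℝ^k. Fix i ∈ {1,…,n} and z ∈ ℤ^k, write N = n_{iz}, and let z₀, z₁, …, z_{N−1} ∈ ℤ^k be any vectors with φ_i(N z) = z₀ + z₁ + … + z_{N−1}. Define f'_{(σ_z)^{-m}(i)} := f_{(σ_z)^{-m}(i)} + Σ_{j=0}^{m−1} (φ_{(σ_z)^{-j}(i)}(z) − z_j) for m = 0,…,N−1. Then for all t ∈ ℝ^k: f'_{(σ_z)^{-m}(i)}(t+z) = f'_{(σ_z)^{-(m+1)}(i)}(t) + z_m for m = 0,…,N−2, and f'_{(σ_z)^{-(N−1)}(i)}(t+z) = f'_i(t) + z_{N−1}. -/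
theorem coeVec_add {k : ℕ} (a b : Fin k → ℤ) : coeVec (a + b) = coeVec a + coeVec b := by
  funext j
  simp [coeVec]

theorem cocycle_nsmul {k n : ℕ}
    (σ : (Fin k → ℤ) → Equiv.Perm (Fin n))
    (φ : Fin n → (Fin k → ℤ) → Fin k → ℤ)
    (hφ : ∀ (i : Fin n) (z₁ z₂ : Fin k → ℤ),
      φ i (z₁ + z₂) = φ i z₁ + φ ((σ z₁)⁻¹ i) z₂)
    (z : Fin k → ℤ) (m : ℕ) (i : Fin n) :
    φ i (m • z) = ∑ j ∈ Finset.range m, φ (((σ z)⁻¹ ^ j) i) z := by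
  induction m generalizing i with
  | zero =>
    -- At index `σ 0 i` the cocycle identity for `0 + 0` has `φ i 0` as its last term.
    have h := hφ (σ 0 i) 0 0
    simpa using h
  | succ m ih =>
    rw [succ_nsmul', hφ, ih, Finset.sum_range_succ', add_comm]
    simp [pow_succ, Equiv.Perm.mul_apply]

theorem stmt12 {k n : ℕ} (hk : 1 ≤ k) (hn : 1 ≤ n)
    (σ : (Fin k → ℤ) → Equiv.Perm (Fin n))
    (hσ : ∀ z₁ z₂ : Fin k → ℤ, σ (z₁ + z₂) = σ z₁ * σ z₂)
    (φ : Fin n → (Fin k → ℤ) → Fin k → ℤ)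
    (hφ : ∀ (i : Fin n) (z₁ z₂ : Fin k → ℤ),
      φ i (z₁ + z₂) = φ i z₁ + φ ((σ z₁)⁻¹ i) z₂)
    (f : Fin n → (Fin k → ℝ) → Fin k → ℝ)
    (hf : ∀ (i : Fin n) (z : Fin k → ℤ) (t : Fin k → ℝ),
      f i (t + coeVec z) = f ((σ z)⁻¹ i) t + coeVec (φ i z))
    (i : Fin n) (z : Fin k → ℤ) (N : ℕ) (hN : IsCycleLen (σ z) i N)
    (zs : ℕ → Fin k → ℤ) (hzs : φ i ((N : ℤ) • z) = ∑ j ∈ Finset.range N, zs j)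
    (f' : ℕ → (Fin k → ℝ) → Fin k → ℝ)
    (hf'def : ∀ m : ℕ, f' m = fun t =>
      f (((σ z)⁻¹ ^ m) i) t + coeVec (∑ j ∈ Finset.range m, (φ (((σ z)⁻¹ ^ j) i) z - zs j))) :
    (∀ (t : Fin k → ℝ) (m : ℕ), m + 1 < N →
      f' m (t + coeVec z) = f' (m + 1) t + coeVec (zs m)) ∧
    (∀ t : Fin k → ℝ, f' (N - 1) (t + coeVec z) = f' 0 t + coeVec (zs (N - 1))) := by
  have step : ∀ (t : Fin k → ℝ) (m : ℕ),
      f' m (t + coeVec z) = f' (m + 1) t + coeVec (zs m) := by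
    intro t m
    simp only [hf'def]
    rw [hf, Finset.sum_range_succ, pow_succ', Equiv.Perm.mul_apply, add_assoc, add_assoc,
      ← coeVec_add, ← coeVec_add]
    congr 2
    abel
  refine ⟨fun t m _ => step t m, fun t => ?_⟩
  obtain ⟨hpos, hfix, -⟩ := hN
  have hfix' : ((σ z)⁻¹ ^ N) i = i := by
    rw [inv_pow, Equiv.Perm.inv_eq_iff_eq, hfix]
  have hsum : ∑ j ∈ Finset.range N, (φ (((σ z)⁻¹ ^ j) i) z - zs j) = 0 := by
    rw [Finset.sum_sub_distrib, ← cocycle_nsmul σ φ hφ, ← hzs, natCast_zsmul, sub_self]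
  have hclose : f' N = f' 0 := by
    rw [hf'def N, hf'def 0, hfix', hsum]
    simp
  rw [step, Nat.sub_add_cancel hpos, hclose]
end

section
/- Let ψ = (φ₁,…,φₙ; σ) : ℤ^k → (ℤ^k)^n ⋊ Σ_n be a morphism. If the image of ψ contains a nontrivial element of finite order, then there exist z ∈ ℤ^k and i ∈ {1,…,n} with z ∉ S_i such that φ_i(n_{iz} z) = 0. -/
/-!
Let `g = ψ z` be a nontrivial torsion element, `g ^ m = 1`. If a power `h` of `g` has a permutation
fixing `i`, then the `i`-th coordinate of `h ^ m` is `m` times that of `h` (`Wreath.vec_pow`), and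
`h ^ m = 1`, so the `i`-th coordinate of `h` vanishes because `ℤ^k` is torsion-free
(`Wreath.vec_eq_zero_of_pow_eq_one`). With `h = g` this shows that `g` moves some `i`: otherwise all
its coordinates vanish and `g = 1`. With `h = g ^ N = ψ (N • z)`, where `N` is the length of the
cycle of `i`, it gives the required vanishing.
-/

/-- The group `(ℤ^k)^n ⋊ Σ_n`, with underlying set `(ℤ^k)^n × Σ_n` and
product `(α₁,…,αₙ;σ)(β₁,…,βₙ;τ) = (α₁+β_{σ⁻¹(1)},…,αₙ+β_{σ⁻¹(n)}; στ)`. -/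
structure Wreath (n k : ℕ) where
  vec : Fin n → Fin k → ℤ
  perm : Equiv.Perm (Fin n)

namespace Wreath

variable {n k : ℕ}

instance : Mul (Wreath n k) :=
  ⟨fun a b => ⟨fun i => a.vec i + b.vec (a.perm⁻¹ i), a.perm * b.perm⟩⟩

instance : One (Wreath n k) := ⟨⟨fun _ => 0, 1⟩⟩

instance : Inv (Wreath n k) :=
  ⟨fun a => ⟨fun i => -(a.vec (a.perm i)), a.perm⁻¹⟩⟩

theorem mul_def (a b : Wreath n k) :
    a * b = ⟨fun i => a.vec i + b.vec (a.perm⁻¹ i), a.perm * b.perm⟩ := rfl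

theorem one_def : (1 : Wreath n k) = ⟨fun _ => 0, 1⟩ := rfl

theorem inv_def (a : Wreath n k) :
    a⁻¹ = ⟨fun i => -(a.vec (a.perm i)), a.perm⁻¹⟩ := rfl

instance : Group (Wreath n k) where
  mul_assoc a b c := by
    simp only [mul_def, mk.injEq, mul_inv_rev, Equiv.Perm.mul_apply, mul_assoc]
    exact ⟨funext fun i => by simp [Equiv.Perm.mul_apply, add_assoc], trivial⟩
  one_mul a := by
    simp only [mul_def, one_def, one_mul]
    cases a; simp
  mul_one a := by
    simp only [mul_def, one_def, mul_one]
    cases a; simp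
  inv_mul_cancel a := by
    simp only [mul_def, inv_def, one_def, mk.injEq, inv_mul_cancel]
    exact ⟨funext fun i => by simp, trivial⟩

end Wreath

namespace Wreath

variable {n k : ℕ}

theorem perm_pow (a : Wreath n k) (j : ℕ) : (a ^ j).perm = a.perm ^ j := by
  induction j with
  | zero => rfl
  | succ j ih => rw [pow_succ, pow_succ, mul_def, ih]

/-- The `i`-th coordinate is additive on powers of an element whose permutation fixes `i`. -/
theorem vec_pow (a : Wreath n k) {i : Fin n} (h : a.perm i = i) (j : ℕ) :
    (a ^ j).vec i = j • a.vec i := by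
  induction j with
  | zero => simp [one_def]
  | succ j ih =>
    have h' : a.perm⁻¹ i = i := by rw [Equiv.Perm.inv_eq_iff_eq, h]
    rw [pow_succ', mul_def, succ_nsmul']
    simp only [h', ih]

theorem vec_eq_zero_of_pow_eq_one (a : Wreath n k) {i : Fin n} (h : a.perm i = i) {m : ℕ}
    (hm : 0 < m) (ha : a ^ m = 1) : a.vec i = 0 := by
  have h1 := vec_pow a h m
  rw [ha, one_def] at h1
  exact (smul_eq_zero.mp h1.symm).resolve_left hm.ne'

end Wreath

theorem isCycleLen_minimalPeriod {n : ℕ} (τ : Equiv.Perm (Fin n)) (i : Fin n) :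
    IsCycleLen τ i (Function.minimalPeriod τ i) := by
  refine ⟨Function.minimalPeriod_pos_of_mem_periodicPts
    (τ.injective.mem_periodicPts i), ?_, fun m hm h => ?_⟩
  · rw [← Equiv.Perm.iterate_eq_pow]
    exact Function.iterate_minimalPeriod
  · rw [← Equiv.Perm.iterate_eq_pow] at h
    exact Function.IsPeriodicPt.minimalPeriod_le hm h

theorem stmt13 {k n : ℕ} (hk : 1 ≤ k) (hn : 1 ≤ n)
    (ψ : (Fin k → ℤ) → Wreath n k)
    (hψ : ∀ z₁ z₂ : Fin k → ℤ, ψ (z₁ + z₂) = ψ z₁ * ψ z₂)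
    (htors : ∃ (z : Fin k → ℤ) (m : ℕ), 0 < m ∧ ψ z ≠ 1 ∧ (ψ z) ^ m = 1) :
    ∃ (z : Fin k → ℤ) (i : Fin n) (N : ℕ), (ψ z).perm i ≠ i ∧
      IsCycleLen ((ψ z).perm) i N ∧ (ψ ((N : ℤ) • z)).vec i = 0 := by
  obtain ⟨z, m, hm, hne, hpow⟩ := htors
  have hψ0 : ψ 0 = 1 := by
    have h := hψ 0 0
    rwa [add_zero, left_eq_mul] at h
  have hψN (N : ℕ) : ψ ((N : ℤ) • z) = ψ z ^ N := by
    rw [natCast_zsmul]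
    induction N with
    | zero => rw [zero_smul, hψ0, pow_zero]
    | succ N ih => rw [succ_nsmul, hψ, ih, pow_succ]
  have hmove : ∃ i, (ψ z).perm i ≠ i := by
    by_contra! hfix
    refine hne ?_
    have hv : (ψ z).vec = fun _ => 0 :=
      funext fun i => (ψ z).vec_eq_zero_of_pow_eq_one (hfix i) hm hpow
    have hp : (ψ z).perm = 1 := Equiv.ext hfix
    rw [Wreath.one_def, ← hv, ← hp]
  obtain ⟨i, hi⟩ := hmove
  have hN := isCycleLen_minimalPeriod (ψ z).perm i
  refine ⟨z, i, _, hi, hN, ?_⟩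
  rw [hψN]
  refine Wreath.vec_eq_zero_of_pow_eq_one _ ?_ hm ?_
  · rw [Wreath.perm_pow]
    exact hN.2.1
  · rw [← pow_mul, mul_comm, pow_mul, hpow, one_pow]
end
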